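/- Pointwise version of the lemma 'if η = 0 then χ^S = 0': let φ ∈ ℝ⁸ be a unit spinor, S : ℝ⁶ → ℝ⁶ any linear map, and for each X ∈ ℝ⁶ define ξ_X ∈ End(ℝ⁶) by ⟨ξ_X Y, Z⟩ = ψ_φ(S(X), Y, Z) for all Y, Z ∈ ℝ⁶, where ψ_φ(X,Y,Z) = −⟨c(X)·c(Y)·c(Z)·φ, φ⟩. Then χ^S := Σᵢ ξ_{uᵢ}(S(uᵢ)) = 0, where u₁,…,u₆ is the standard orthonormal basis of ℝ⁶. -/

import Mathlib

/- STATEMENT 15: (pointwise Lemma "η = 0 ⟹ χ^S = 0") Let φ ∈ ℝ⁸ be a unit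
spinor, S : ℝ⁶ → ℝ⁶ linear, and ξ_X defined by ⟨ξ_X Y, Z⟩ = ψ_φ(S X, Y, Z) where
ψ_φ(X,Y,Z) = −⟨c(X)·c(Y)·c(Z)·φ, φ⟩. Then χ^S = Σᵢ ξ_{uᵢ}(S uᵢ) = 0. -/

open Matrix
open scoped RealInnerProductSpace

noncomputable section

namespace Stmt15

def E (i j : Fin 8) : Matrix (Fin 8) (Fin 8) ℝ :=
  Matrix.of fun k l => if k = i ∧ l = j then (-1 : ℝ) else if k = j ∧ l = i then 1 else 0

def e : Fin 6 → Matrix (Fin 8) (Fin 8) ℝ :=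
  ![E 0 7 + E 1 6 - E 2 5 - E 3 4,
    -E 0 6 + E 1 7 + E 2 4 - E 3 5,
    -E 0 5 + E 1 4 - E 2 7 + E 3 6,
    -E 0 4 - E 1 5 - E 2 6 - E 3 7,
    -E 0 2 - E 1 3 + E 4 6 + E 5 7,
    E 0 3 - E 1 2 - E 4 7 + E 5 6]

abbrev V8 := EuclideanSpace ℝ (Fin 8)
abbrev V6 := EuclideanSpace ℝ (Fin 6)

def c (X : V6) : Matrix (Fin 8) (Fin 8) ℝ := ∑ a, X a • e a

def act (M : Matrix (Fin 8) (Fin 8) ℝ) (ψ : V8) : V8 :=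
  (EuclideanSpace.equiv (Fin 8) ℝ).symm (M.mulVec (EuclideanSpace.equiv (Fin 8) ℝ ψ))

/-- The 3-form `ψ_φ(X,Y,Z) = −⟨c(X)·c(Y)·c(Z)·φ, φ⟩`. -/
def ψf (φ : V8) (X Y Z : V6) : ℝ := -⟪act (c X) (act (c Y) (act (c Z) φ)), φ⟫

/-- The standard orthonormal basis `u₁, …, u₆` of `ℝ⁶` (0-based). -/
def u (i : Fin 6) : V6 := EuclideanSpace.single i 1

set_option maxHeartbeats 4000000 in
/-- Clifford multiplication as an explicit matrix. -/
theorem c_eq (W : V6) : c W = !![0, 0, W 4, -W 5, W 3, W 2, W 1, -W 0;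
    0, 0, W 5, W 4, -W 2, W 3, -W 0, -W 1;
    -W 4, -W 5, 0, 0, -W 1, W 0, W 3, W 2;
    W 5, -W 4, 0, 0, W 0, W 1, -W 2, W 3;
    -W 3, W 2, W 1, -W 0, 0, 0, -W 4, W 5;
    -W 2, -W 3, -W 0, -W 1, 0, 0, -W 5, -W 4;
    -W 1, W 0, -W 3, W 2, W 4, W 5, 0, 0;
    W 0, W 1, -W 2, -W 3, -W 5, W 4, 0, 0] := by
  ext i j
  simp only [c, Fin.sum_univ_six, Matrix.add_apply, Matrix.smul_apply, e]
  fin_cases i <;> fin_cases j <;> simp [E]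

theorem c_transpose (W : V6) : (c W)ᵀ = -c W := by
  rw [c_eq]
  ext i j
  fin_cases i <;> fin_cases j <;> simp

theorem c_sq (W : V6) : c W * c W = (-∑ a, W a ^ 2) • (1 : Matrix (Fin 8) (Fin 8) ℝ) := by
  rw [c_eq]
  ext i j
  fin_cases i <;> fin_cases j <;>
    simp [Matrix.mul_apply, Fin.sum_univ_succ] <;> ring

theorem act_act (M N : Matrix (Fin 8) (Fin 8) ℝ) (ψ : V8) : act M (act N ψ) = act (M * N) ψ := by
  simp only [act, ContinuousLinearEquiv.apply_symm_apply, Matrix.mulVec_mulVec]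

theorem act_smul_one (r : ℝ) (ψ : V8) : act (r • (1 : Matrix (Fin 8) (Fin 8) ℝ)) ψ = r • ψ := by
  ext i
  simp [act, Matrix.smul_mulVec]

theorem inner_act_self (Z : V6) (φ : V8) : ⟪act (c Z) φ, φ⟫ = 0 := by
  have h : ∀ M : Matrix (Fin 8) (Fin 8) ℝ, ⟪act M φ, φ⟫ = φ.ofLp ⬝ᵥ (M *ᵥ φ.ofLp) := by
    intro M
    simp [act, EuclideanSpace.inner_eq_star_dotProduct]
    rfl
  have h2 : φ.ofLp ⬝ᵥ (c Z *ᵥ φ.ofLp) = -(φ.ofLp ⬝ᵥ (c Z *ᵥ φ.ofLp)) := by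
    conv_lhs => rw [Matrix.dotProduct_mulVec, ← Matrix.mulVec_transpose, c_transpose,
      Matrix.neg_mulVec, neg_dotProduct, dotProduct_comm]
  rw [h]
  linarith

theorem ψf_self (φ : V8) (W Z : V6) : ψf φ W W Z = 0 := by
  rw [ψf, act_act, c_sq, act_smul_one, real_inner_smul_left, inner_act_self]
  simp

theorem chiS_vanishes (φ : V8) (hφ : ‖φ‖ = 1) (S : V6 →ₗ[ℝ] V6)
    (ξ : V6 → V6 → V6)
    (hξ : ∀ X Y Z : V6, ⟪ξ X Y, Z⟫ = ψf φ (S X) Y Z) :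
    ∑ i : Fin 6, ξ (u i) (S (u i)) = 0 := by
  refine Finset.sum_eq_zero fun i _ => ?_
  refine ext_inner_right ℝ fun Z => ?_
  rw [hξ, ψf_self, inner_zero_left]

end Stmt15
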